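/- There exists η₀ > 0 such that for every γ ∈ C_c^∞(ℝ) supported in [−η₀,η₀] the following hold. Define, for x ∈ (−1,1) and ξ ∈ ℝ, e_±(x,ξ) = ((x + p'(±ξ))/(ξ ∓ dφ(x))) γ(⟨ξ⟩²(x + p'(±ξ))) and ẽ_±(x,ξ) = ((ξ ∓ dφ(x))/(x + p'(±ξ))) γ(⟨ξ⟩²(x + p'(±ξ))). Then for all α, β ∈ ℕ there are constants C_{αβ} with |∂_x^α∂_ξ^β e_±(x,ξ)| ≤ C_{αβ} ⟨ξ⟩^{−3+2α−β} and |∂_x^α∂_ξ^β ẽ_±(x,ξ)| ≤ C_{αβ} ⟨ξ⟩^{3+2α−β}. Moreover, on the support of γ(⟨ξ⟩²(x+p'(±ξ))) one has c⟨ξ⟩ ≤ ⟨dφ(x)⟩ ≤ c^{−1}⟨ξ⟩ for some c > 0, and there is A > 0 such that on that support, for ξ ≥ 1, A^{−1}⟨ξ⟩^{−2} ≤ ±x + 1 ≤ A⟨ξ⟩^{−2}, while for ξ ≤ −1, A^{−1}⟨ξ⟩^{−2} ≤ ∓x + 1 ≤ A⟨ξ⟩^{−2}. Finally, for every k ∈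 ℕ there is C_k with |(d/dx)^k(dφ(x))| ≤ C_k ⟨dφ(x)⟩^{1+2k} for all x ∈ (−1,1). -/

import Mathlib

noncomputable section

/-- `p'(ξ) = ξ/√(1+ξ²)`. -/
def pprime (ξ : ℝ) : ℝ := ξ / Real.sqrt (1 + ξ^2)
/-- The Japanese bracket `⟨z⟩ = √(1+z²)`. -/
def jap (z : ℝ) : ℝ := Real.sqrt (1 + z^2)
/-- `dφ(x) = −x/√(1−x²)`, the derivative of `φ(x) = √(1−x²)` on `(−1,1)`. -/
def dphi (x : ℝ) : ℝ := -x / Real.sqrt (1 - x^2)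

/-- Partial derivative in `x` of a real symbol. -/
def pd1R (f : ℝ → ℝ → ℝ) : ℝ → ℝ → ℝ := fun x ξ => deriv (fun x' => f x' ξ) x
/-- Partial derivative in `ξ` of a real symbol. -/
def pd2R (f : ℝ → ℝ → ℝ) : ℝ → ℝ → ℝ := fun x ξ => deriv (fun ξ' => f x ξ') ξ

/-- The symbol `e_±(x,ξ)` (with `sg = ±1`). -/
def esym (γ : ℝ → ℝ) (sg : ℝ) (x ξ : ℝ) : ℝ :=
  (x + pprime (sg * ξ)) / (ξ - sg * dphi x) * γ (jap ξ ^ 2 * (x + pprime (sg * ξ)))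
/-- The symbol `ẽ_±(x,ξ)` (with `sg = ±1`). -/
def etsym (γ : ℝ → ℝ) (sg : ℝ) (x ξ : ℝ) : ℝ :=
  (ξ - sg * dphi x) / (x + pprime (sg * ξ)) * γ (jap ξ ^ 2 * (x + pprime (sg * ξ)))

/-!
Write `T = ⟨ξ⟩`, `p = p'(ξ)` and `w = ⟨ξ⟩² (x + p'(ξ))`. Since `T² (1 - p²) = 1`, the quantity
`T² (1 - x²) = (1 + p w)² - w² =: D` depends on `(p, w)` only, and
`ξ - dφ(x) = T³ (x + p) g(p, w)` with `g` smooth and positive near `[-1, 1] × [-1/4, 1/4]`. Off the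
curve `x + p'(ξ) = 0`, the cut-off symbols are therefore of the form `T ^ m K(p, w)` with `K` smooth
and compactly supported in `w`. The chain rule keeps this form: `∂_x` turns `m` into `m + 2` and
`∂_ξ` turns it into `m - 1`. The lower sign follows from the upper one by `ξ ↦ -ξ`.
-/

section Bracket

lemma jap_pos (ξ : ℝ) : 0 < jap ξ := Real.sqrt_pos.2 (by positivity)

lemma jap_sq (ξ : ℝ) : jap ξ ^ 2 = 1 + ξ ^ 2 := Real.sq_sqrt (by positivity)

lemma jap_neg (ξ : ℝ) : jap (-ξ) = jap ξ := by simp [jap]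

lemma jap_sign_mul {sg : ℝ} (hsg : sg = 1 ∨ sg = -1) (ξ : ℝ) : jap (sg * ξ) = jap ξ := by
  rcases hsg with rfl | rfl <;> simp [jap_neg]

lemma pprime_neg (ξ : ℝ) : pprime (-ξ) = -pprime ξ := by simp [pprime, neg_div]

lemma pprime_mul_jap (ξ : ℝ) : pprime ξ * jap ξ = ξ := div_mul_cancel₀ ξ (jap_pos ξ).ne'

lemma jap_sq_mul_one_sub_pprime_sq (ξ : ℝ) : jap ξ ^ 2 * (1 - pprime ξ ^ 2) = 1 := by
  calc jap ξ ^ 2 * (1 - pprime ξ ^ 2) = jap ξ ^ 2 - (pprime ξ * jap ξ) ^ 2 := by ring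
    _ = 1 := by rw [pprime_mul_jap, jap_sq]; ring

lemma jap_rpow_neg_two (ξ : ℝ) : jap ξ ^ (-(2 : ℝ)) = 1 - pprime ξ ^ 2 := by
  rw [Real.rpow_neg (jap_pos ξ).le, Real.rpow_two]
  exact inv_eq_of_mul_eq_one_right (jap_sq_mul_one_sub_pprime_sq ξ)

lemma pprime_mem_Icc (ξ : ℝ) : pprime ξ ∈ Set.Icc (-1) 1 := by
  have hpos : 0 < 1 - pprime ξ ^ 2 := jap_rpow_neg_two ξ ▸ Real.rpow_pos_of_pos (jap_pos ξ) _
  exact abs_le.1 ((sq_le_one_iff_abs_le_one _).1 (by linarith))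

lemma hasDerivAt_jap (ξ : ℝ) : HasDerivAt jap (pprime ξ) ξ := by
  have hsq : HasDerivAt (fun z : ℝ => 1 + z ^ 2) (2 * ξ) ξ := by
    simpa using (hasDerivAt_pow 2 ξ).const_add 1
  exact (hsq.sqrt (by positivity)).congr_deriv (mul_div_mul_left _ _ two_ne_zero)

lemma hasDerivAt_pprime (ξ : ℝ) : HasDerivAt pprime ((1 - pprime ξ ^ 2) / jap ξ) ξ := by
  have hT := jap_pos ξ
  refine ((hasDerivAt_id ξ).div (hasDerivAt_jap ξ) hT.ne').congr_deriv ?_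
  rw [id, div_eq_div_iff (by positivity) hT.ne']
  nth_rw 2 [← pprime_mul_jap ξ]
  ring

end Bracket

section LagrangianCoordinate

/-- The rescaled defining function `⟨ξ⟩² (x + p'(ξ))` of the Lagrangian `ξ = dφ(x)`, in which the
cut-off `γ` is evaluated. -/
def lagrangianCoord (x ξ : ℝ) : ℝ := jap ξ ^ 2 * (x + pprime ξ)

lemma abs_lagrangianCoord_neg_neg (x ξ : ℝ) :
    |lagrangianCoord (-x) (-ξ)| = |lagrangianCoord x ξ| := by
  rw [← abs_neg (lagrangianCoord x ξ)]
  simp only [lagrangianCoord, jap_neg, pprime_neg]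
  ring_nf

lemma eq_lagrangianCoord_mul_sub_pprime (x ξ : ℝ) :
    x = lagrangianCoord x ξ * (1 - pprime ξ ^ 2) - pprime ξ := by
  rw [lagrangianCoord]
  linear_combination -(x + pprime ξ) * jap_sq_mul_one_sub_pprime_sq ξ

lemma hasDerivAt_lagrangianCoord_fst (x ξ : ℝ) :
    HasDerivAt (fun x' => lagrangianCoord x' ξ) (jap ξ ^ 2) x := by
  simpa [lagrangianCoord] using
    ((hasDerivAt_id x).add_const (pprime ξ)).const_mul (jap ξ ^ 2)

lemma hasDerivAt_lagrangianCoord_snd (x ξ : ℝ) :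
    HasDerivAt (lagrangianCoord x) ((2 * pprime ξ * lagrangianCoord x ξ + 1) / jap ξ) ξ := by
  have hT := jap_pos ξ
  have h : HasDerivAt (lagrangianCoord x) _ ξ :=
    ((hasDerivAt_jap ξ).fun_pow 2).fun_mul ((hasDerivAt_pprime ξ).const_add x)
  refine h.congr_deriv ?_
  rw [lagrangianCoord]
  field_simp
  push_cast
  linear_combination jap_sq_mul_one_sub_pprime_sq ξ

end LagrangianCoordinate

section Amplitude

open Set Topology
open scoped ContDiff

/-- A function `K(p, w)` that is smooth near the strip `[-1, 1] × ℝ`, where the pairs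
`(p'(ξ), lagrangianCoord x ξ)` live, and vanishes for `|w| > η`. -/
structure IsAmplitude (η : ℝ) (K : ℝ × ℝ → ℝ) : Prop where
  contDiffAt : ∀ z : ℝ × ℝ, z.1 ∈ Icc (-1) 1 → ContDiffAt ℝ ∞ K z
  eq_zero : ∀ z : ℝ × ℝ, η < |z.2| → K z = 0

/-- The symbol `⟨ξ⟩ ^ m K(p'(ξ), ⟨ξ⟩² (x + p'(ξ)))` with amplitude `K`. -/
def amplitudeSymbol (m : ℝ) (K : ℝ × ℝ → ℝ) (x ξ : ℝ) : ℝ :=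
  jap ξ ^ m * K (pprime ξ, lagrangianCoord x ξ)

/-- The amplitude, of order `m - 1`, of the `ξ`-derivative of `amplitudeSymbol m K`. -/
def xiDerivAmplitude (m : ℝ) (K : ℝ × ℝ → ℝ) (z : ℝ × ℝ) : ℝ :=
  m * z.1 * K z + (1 - z.1 ^ 2) * fderiv ℝ K z (1, 0) + (2 * z.1 * z.2 + 1) * fderiv ℝ K z (0, 1)

variable {η : ℝ} {K : ℝ × ℝ → ℝ}

lemma IsAmplitude.fderiv_apply (hK : IsAmplitude η K) (v : ℝ × ℝ) :
    IsAmplitude η (fun z => fderiv ℝ K z v) where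
  contDiffAt z hz := ((hK.contDiffAt z hz).fderiv_right (by simp)).clm_apply contDiffAt_const
  eq_zero z hz := by
    have hopen : IsOpen {z : ℝ × ℝ | η < |z.2|} := isOpen_lt continuous_const (by fun_prop)
    have hzero : K =ᶠ[𝓝 z] fun _ => 0 := by
      filter_upwards [hopen.mem_nhds hz] with y hy using hK.eq_zero y hy
    simp [hzero.fderiv_eq]

lemma IsAmplitude.xiDeriv (hK : IsAmplitude η K) (m : ℝ) :
    IsAmplitude η (xiDerivAmplitude m K) where
  contDiffAt z hz := by
    have hK₀ := hK.contDiffAt z hz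
    have := (hK.fderiv_apply (1, 0)).contDiffAt z hz
    have := (hK.fderiv_apply (0, 1)).contDiffAt z hz
    unfold xiDerivAmplitude
    fun_prop
  eq_zero z hz := by
    have hK₁ := (hK.fderiv_apply (1, 0)).eq_zero z hz
    have hK₂ := (hK.fderiv_apply (0, 1)).eq_zero z hz
    simp only [xiDerivAmplitude, hK.eq_zero z hz, hK₁, hK₂, mul_zero, add_zero]

lemma IsAmplitude.exists_bound (hK : IsAmplitude η K) :
    ∃ C : ℝ, 0 < C ∧ ∀ z : ℝ × ℝ, z.1 ∈ Icc (-1) 1 → |K z| ≤ C := by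
  have hcont : ContinuousOn K (Icc (-1) 1 ×ˢ Icc (-η) η) := fun z hz =>
    (hK.contDiffAt z hz.1).continuousAt.continuousWithinAt
  obtain ⟨C, hC⟩ := (isCompact_Icc.prod isCompact_Icc).exists_bound_of_continuousOn hcont
  refine ⟨max C 1, by positivity, fun z hz => ?_⟩
  rcases lt_or_ge η |z.2| with hw | hw
  · simp [hK.eq_zero z hw]
  · exact (hC z ⟨hz, abs_le.1 hw⟩).trans (le_max_left _ _)

lemma IsAmplitude.hasFDerivAt (hK : IsAmplitude η K) {z : ℝ × ℝ} (hz : z.1 ∈ Icc (-1) 1) :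
    HasFDerivAt K (fderiv ℝ K z) z :=
  ((hK.contDiffAt z hz).differentiableAt (by simp)).hasFDerivAt

lemma hasDerivAt_amplitudeSymbol_fst (hK : IsAmplitude η K) (m x ξ : ℝ) :
    HasDerivAt (fun x' => amplitudeSymbol m K x' ξ)
      (amplitudeSymbol (m + 2) (fun z => fderiv ℝ K z (0, 1)) x ξ) x := by
  have hpath := (hasDerivAt_const x (pprime ξ)).prodMk (hasDerivAt_lagrangianCoord_fst x ξ)
  have hK' := hK.hasFDerivAt (z := (pprime ξ, lagrangianCoord x ξ)) (pprime_mem_Icc ξ)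
  refine ((hK'.comp_hasDerivAt x hpath).const_mul (jap ξ ^ m)).congr_deriv ?_
  have hdir : ((0 : ℝ), jap ξ ^ 2) = jap ξ ^ 2 • ((0 : ℝ), (1 : ℝ)) := by simp
  rw [hdir, map_smul, amplitudeSymbol, Real.rpow_add (jap_pos ξ), Real.rpow_two, smul_eq_mul,
    mul_assoc]

lemma hasDerivAt_amplitudeSymbol_snd (hK : IsAmplitude η K) (m x ξ : ℝ) :
    HasDerivAt (amplitudeSymbol m K x) (amplitudeSymbol (m - 1) (xiDerivAmplitude m K) x ξ) ξ := by
  have hT := jap_pos ξ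
  have hpath := (hasDerivAt_pprime ξ).prodMk (hasDerivAt_lagrangianCoord_snd x ξ)
  have hK' := hK.hasFDerivAt (z := (pprime ξ, lagrangianCoord x ξ)) (pprime_mem_Icc ξ)
  have h : HasDerivAt (amplitudeSymbol m K x) _ ξ :=
    ((hasDerivAt_jap ξ).rpow_const (p := m) (Or.inl hT.ne')).fun_mul (hK'.comp_hasDerivAt ξ hpath)
  refine h.congr_deriv ?_
  have hdir : ∀ a b : ℝ, (a, b) = a • ((1 : ℝ), (0 : ℝ)) + b • ((0 : ℝ), (1 : ℝ)) := by simp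
  have hm : jap ξ ^ m = jap ξ ^ (m - 1) * jap ξ := by
    rw [← Real.rpow_add_one hT.ne', sub_add_cancel]
  rw [hdir ((1 - pprime ξ ^ 2) / jap ξ), map_add, map_smul, map_smul, hm]
  simp only [amplitudeSymbol, xiDerivAmplitude, smul_eq_mul]
  field_simp
  ring

end Amplitude

section SymbolClass

open Set Topology

/-- Symbols of order `m` microlocalized near the Lagrangian: off the curve `x + p'(ξ) = 0` they are
given by an amplitude. On that curve quotients such as `e` and `ẽ` are `0 / 0 = 0` in Lean and their
derivatives may be junk values, so there the value `0` is allowed as well. -/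
def IsLagrangianSymbol (η m : ℝ) (f : ℝ → ℝ → ℝ) : Prop :=
  ∃ K, IsAmplitude η K ∧ ∀ x ∈ Ioo (-1 : ℝ) 1, ∀ ξ : ℝ,
    (x + pprime ξ ≠ 0 → f x ξ = amplitudeSymbol m K x ξ) ∧
      (f x ξ = amplitudeSymbol m K x ξ ∨ f x ξ = 0)

lemma deriv_of_eventuallyEq_nhdsNE {f F : ℝ → ℝ} {F' a : ℝ} (hF : HasDerivAt F F' a)
    (h : f =ᶠ[𝓝[≠] a] F) : (f a = F a → deriv f a = F') ∧ (deriv f a = F' ∨ deriv f a = 0) := by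
  constructor
  · intro ha
    rw [(eventuallyEq_nhds_of_eventuallyEq_nhdsNE h ha).deriv_eq, hF.deriv]
  · by_cases hd : DifferentiableAt ℝ f a
    · left
      have hnhds : f =ᶠ[𝓝 a] F :=
        (hd.continuousAt.eventuallyEq_nhds_iff_eventuallyEq_nhdsNE hF.continuousAt).1 h
      rw [hnhds.deriv_eq, hF.deriv]
    · exact Or.inr (deriv_zero_of_not_differentiableAt hd)

namespace IsLagrangianSymbol

variable {η m : ℝ} {f : ℝ → ℝ → ℝ}

lemma partial_fst (hf : IsLagrangianSymbol η m f) : IsLagrangianSymbol η (m + 2) (pd1R f) := by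
  obtain ⟨K, hK, hfK⟩ := hf
  refine ⟨_, hK.fderiv_apply (0, 1), fun x hx ξ => ?_⟩
  have hoff : ∀ᶠ x' in 𝓝[≠] x, x' + pprime ξ ≠ 0 :=
    ((hasDerivAt_id x).add_const (pprime ξ)).eventually_ne one_ne_zero
  have heq : (fun x' => f x' ξ) =ᶠ[𝓝[≠] x] fun x' => amplitudeSymbol m K x' ξ := by
    filter_upwards [hoff, nhdsWithin_le_nhds (isOpen_Ioo.mem_nhds hx)] with x' hne hx'
      using (hfK x' hx' ξ).1 hne
  obtain ⟨hderiv, hderiv_or⟩ :=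
    deriv_of_eventuallyEq_nhdsNE (hasDerivAt_amplitudeSymbol_fst hK m x ξ) heq
  exact ⟨fun hne => hderiv ((hfK x hx ξ).1 hne), hderiv_or⟩

lemma partial_snd (hf : IsLagrangianSymbol η m f) : IsLagrangianSymbol η (m - 1) (pd2R f) := by
  obtain ⟨K, hK, hfK⟩ := hf
  refine ⟨_, hK.xiDeriv m, fun x hx ξ => ?_⟩
  have hslope : (1 - pprime ξ ^ 2) / jap ξ ≠ 0 :=
    div_ne_zero (right_ne_zero_of_mul_eq_one (jap_sq_mul_one_sub_pprime_sq ξ)) (jap_pos ξ).ne'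
  have hoff : ∀ᶠ ξ' in 𝓝[≠] ξ, x + pprime ξ' ≠ 0 :=
    ((hasDerivAt_pprime ξ).const_add x).eventually_ne hslope
  have heq : f x =ᶠ[𝓝[≠] ξ] amplitudeSymbol m K x := by
    filter_upwards [hoff] with ξ' hne using (hfK x hx ξ').1 hne
  obtain ⟨hderiv, hderiv_or⟩ :=
    deriv_of_eventuallyEq_nhdsNE (hasDerivAt_amplitudeSymbol_snd hK m x ξ) heq
  exact ⟨fun hne => hderiv ((hfK x hx ξ).1 hne), hderiv_or⟩

lemma iterate_partial_snd (hf : IsLagrangianSymbol η m f) (β : ℕ) :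
    IsLagrangianSymbol η (m - β) (pd2R^[β] f) := by
  induction β with
  | zero => simpa using hf
  | succ b ih =>
    rw [Function.iterate_succ_apply', Nat.cast_succ, ← sub_sub]
    exact ih.partial_snd

lemma iterate_partial_fst (hf : IsLagrangianSymbol η m f) (α : ℕ) :
    IsLagrangianSymbol η (m + 2 * α) (pd1R^[α] f) := by
  induction α with
  | zero => simpa using hf
  | succ a ih =>
    rw [Function.iterate_succ_apply', Nat.cast_succ, mul_add_one, ← add_assoc]
    exact ih.partial_fst

lemma exists_bound (hf : IsLagrangianSymbol η m f) :
    ∃ C : ℝ, 0 < C ∧ ∀ x ∈ Ioo (-1 : ℝ) 1, ∀ ξ : ℝ, |f x ξ| ≤ C * jap ξ ^ m := by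
  obtain ⟨K, hK, hfK⟩ := hf
  obtain ⟨C, hC, hbound⟩ := hK.exists_bound
  refine ⟨C, hC, fun x hx ξ => ?_⟩
  have hT : 0 < jap ξ ^ m := Real.rpow_pos_of_pos (jap_pos ξ) m
  rcases (hfK x hx ξ).2 with h | h
  · rw [h, amplitudeSymbol, abs_mul, abs_of_pos hT, mul_comm]
    exact mul_le_mul_of_nonneg_right (hbound _ (pprime_mem_Icc ξ)) hT.le
  · rw [h, abs_zero]
    positivity

end IsLagrangianSymbol

lemma iterate_pd2R_dilation (f : ℝ → ℝ → ℝ) (c d : ℝ) (β : ℕ) :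
    pd2R^[β] (fun x ξ => c * f x (d * ξ)) = fun x ξ => c * d ^ β * pd2R^[β] f x (d * ξ) := by
  induction β with
  | zero => simp
  | succ b ih =>
    funext x ξ
    rw [Function.iterate_succ_apply', Function.iterate_succ_apply', ih, pd2R, deriv_const_mul_field,
      deriv_comp_mul_left d (pd2R^[b] f x), pd2R, smul_eq_mul, pow_succ]
    ring

lemma iterate_pd1R_dilation (f : ℝ → ℝ → ℝ) (c d : ℝ) (α : ℕ) :
    pd1R^[α] (fun x ξ => c * f x (d * ξ)) = fun x ξ => c * pd1R^[α] f x (d * ξ) := by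
  induction α with
  | zero => rfl
  | succ a ih =>
    funext x ξ
    rw [Function.iterate_succ_apply', Function.iterate_succ_apply', ih, pd1R, deriv_const_mul_field,
      pd1R]

lemma IsLagrangianSymbol.exists_bound_iterate_sign {η m sg : ℝ} {f : ℝ → ℝ → ℝ}
    (hf : IsLagrangianSymbol η m f) (hsg : sg = 1 ∨ sg = -1) (α β : ℕ) :
    ∃ C : ℝ, 0 < C ∧ ∀ x ∈ Ioo (-1 : ℝ) 1, ∀ ξ : ℝ,
      |(pd1R^[α] (pd2R^[β] (fun x ξ => sg * f x (sg * ξ)))) x ξ| ≤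
        C * jap ξ ^ (m + 2 * (α : ℝ) - (β : ℝ)) := by
  obtain ⟨C, hC, hbound⟩ := ((hf.iterate_partial_snd β).iterate_partial_fst α).exists_bound
  refine ⟨C, hC, fun x hx ξ => ?_⟩
  have habs : |sg| = 1 := by rcases hsg with rfl | rfl <;> simp
  rw [iterate_pd2R_dilation, iterate_pd1R_dilation, abs_mul, abs_mul, abs_pow, habs, one_pow,
    one_mul, one_mul, ← jap_sign_mul hsg, add_sub_right_comm]
  exact hbound x hx (sg * ξ)

end SymbolClass

section LagrangianModel

open Set Topology
open scoped ContDiff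

/-- The value of `⟨ξ⟩² (1 - x²)` in terms of `p = p'(ξ)` and `w = lagrangianCoord x ξ`. -/
def phiSqAmplitude (z : ℝ × ℝ) : ℝ := (1 + z.1 * z.2) ^ 2 - z.2 ^ 2

/-- The value of `(ξ - dφ(x)) / (⟨ξ⟩³ (x + p'(ξ)))` in terms of `p = p'(ξ)` and
`w = lagrangianCoord x ξ`; it stays smooth across the Lagrangian. -/
def quotientAmplitude (z : ℝ × ℝ) : ℝ :=
  (1 + z.1 ^ 2 + (1 - z.1 ^ 2) * (√(phiSqAmplitude z) - z.1 * z.2)) /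
    (√(phiSqAmplitude z) * (√(phiSqAmplitude z) + 1))

variable {x : ℝ} {z : ℝ × ℝ}

lemma one_sub_sq_pos_of_mem_Ioo (hx : x ∈ Ioo (-1 : ℝ) 1) : 0 < 1 - x ^ 2 := by
  nlinarith [hx.1, hx.2]

lemma jap_dphi (hx : x ∈ Ioo (-1 : ℝ) 1) : jap (dphi x) = (√(1 - x ^ 2))⁻¹ := by
  have hpos := one_sub_sq_pos_of_mem_Ioo hx
  rw [jap, dphi, div_pow, Real.sq_sqrt hpos.le, ← Real.sqrt_inv]
  congr 1
  field_simp
  ring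

lemma sqrt_phiSqAmplitude (x ξ : ℝ) :
    √(phiSqAmplitude (pprime ξ, lagrangianCoord x ξ)) = jap ξ * √(1 - x ^ 2) := by
  have hvalue : phiSqAmplitude (pprime ξ, lagrangianCoord x ξ) = jap ξ ^ 2 * (1 - x ^ 2) := by
    rw [phiSqAmplitude, lagrangianCoord]
    linear_combination (-1 - jap ξ ^ 2 * (x + pprime ξ) ^ 2) * jap_sq_mul_one_sub_pprime_sq ξ
  rw [hvalue, Real.sqrt_mul (sq_nonneg _), Real.sqrt_sq (jap_pos ξ).le]

lemma sub_dphi_eq_mul_quotientAmplitude (hx : x ∈ Ioo (-1 : ℝ) 1) (ξ : ℝ) :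
    ξ - dphi x =
      jap ξ ^ 3 * (x + pprime ξ) * quotientAmplitude (pprime ξ, lagrangianCoord x ξ) := by
  have hpos := one_sub_sq_pos_of_mem_Ioo hx
  have hs : 0 < √(1 - x ^ 2) := Real.sqrt_pos.2 hpos
  have hs_sq : √(1 - x ^ 2) ^ 2 = 1 - x ^ 2 := Real.sq_sqrt hpos.le
  have hT := jap_pos ξ
  have hp := jap_sq_mul_one_sub_pprime_sq ξ
  rw [quotientAmplitude, sqrt_phiSqAmplitude, lagrangianCoord, dphi]
  nth_rw 1 [← pprime_mul_jap ξ]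
  generalize pprime ξ = p at *
  generalize jap ξ = T at *
  generalize √(1 - x ^ 2) = s at *
  have hnum : T * (1 + p ^ 2 + (1 - p ^ 2) * (T * s - p * (T ^ 2 * (x + p)))) =
      T * (1 - p * x) + s := by
    linear_combination (s - T * p * (x + p)) * hp
  have hcross : (p * T * s + x) * (T * s + 1) = T * (x + p) * (T * (1 - p * x) + s) := by
    linear_combination p * T ^ 2 * hs_sq - x * hp
  calc p * T - -x / s = (p * T * s + x) * (T * s + 1) / (s * (T * s + 1)) := by
        field_simp
        ring
    _ = T ^ 3 * (x + p) *
        ((1 + p ^ 2 + (1 - p ^ 2) * (T * s - p * (T ^ 2 * (x + p)))) / (T * s * (T * s + 1))) := by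
        rw [hcross, ← hnum]
        field_simp

lemma sqrt_phiSqAmplitude_mem_Icc (hp : z.1 ∈ Icc (-1) 1) (hw : |z.2| ≤ 1 / 4) :
    √(phiSqAmplitude z) ∈ Icc (1 / 2) 2 := by
  obtain ⟨p, w⟩ := z
  have hpw : |p * w| ≤ 1 / 4 := by
    rw [abs_mul]
    exact (mul_le_of_le_one_left (abs_nonneg w) (abs_le.2 hp)).trans hw
  obtain ⟨hpw₁, hpw₂⟩ := abs_le.1 hpw
  obtain ⟨hw₁, hw₂⟩ := abs_le.1 hw
  simp only at hw₁ hw₂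
  constructor
  · apply Real.le_sqrt_of_sq_le
    simp only [phiSqAmplitude]
    nlinarith
  · rw [Real.sqrt_le_left (by norm_num)]
    simp only [phiSqAmplitude]
    nlinarith

lemma quotientAmplitude_pos (hp : z.1 ∈ Icc (-1) 1) (hw : |z.2| ≤ 1 / 4) :
    0 < quotientAmplitude z := by
  have hR : 1 / 2 ≤ √(phiSqAmplitude z) := (sqrt_phiSqAmplitude_mem_Icc hp hw).1
  have hpw : z.1 * z.2 ≤ 1 / 4 := by
    refine (le_abs_self _).trans ?_
    rw [abs_mul]
    exact (mul_le_of_le_one_left (abs_nonneg z.2) (abs_le.2 hp)).trans hw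
  have hp_sq : 0 ≤ 1 - z.1 ^ 2 := by nlinarith [hp.1, hp.2]
  have hgap : 0 ≤ (1 - z.1 ^ 2) * (√(phiSqAmplitude z) - z.1 * z.2) :=
    mul_nonneg hp_sq (by linarith)
  unfold quotientAmplitude
  positivity

lemma contDiffAt_quotientAmplitude (hp : z.1 ∈ Icc (-1) 1) (hw : |z.2| ≤ 1 / 4) :
    ContDiffAt ℝ ∞ quotientAmplitude z := by
  have hR : 0 < √(phiSqAmplitude z) :=
    one_half_pos.trans_le (sqrt_phiSqAmplitude_mem_Icc hp hw).1
  have hD : ContDiffAt ℝ ∞ phiSqAmplitude z := by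
    unfold phiSqAmplitude
    fun_prop
  have hsqrt : ContDiffAt ℝ ∞ (fun z => √(phiSqAmplitude z)) z := hD.sqrt (Real.sqrt_pos.1 hR).ne'
  exact ContDiffAt.div (by fun_prop) (by fun_prop) (by positivity)

end LagrangianModel

section CutoffSymbols

open Set Topology
open scoped ContDiff

variable {η m : ℝ} {γ : ℝ → ℝ}

lemma abs_le_of_tsupport_subset_Icc (hγ : tsupport γ ⊆ Icc (-η) η) {w : ℝ} (hw : γ w ≠ 0) :
    |w| ≤ η :=
  abs_le.2 (hγ (subset_tsupport γ hw))

lemma isAmplitude_cutoff_mul (hγ : ContDiff ℝ ∞ γ) (hsupp : tsupport γ ⊆ Icc (-η) η)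
    {G : ℝ × ℝ → ℝ} (hG : ∀ z : ℝ × ℝ, z.1 ∈ Icc (-1) 1 → |z.2| ≤ η → ContDiffAt ℝ ∞ G z) :
    IsAmplitude η (fun z => γ z.2 * G z) where
  contDiffAt z hz := by
    by_cases hw : z.2 ∈ tsupport γ
    · exact (hγ.contDiffAt.comp z contDiffAt_snd).mul (hG z hz (abs_le.2 (hsupp hw)))
    · have hopen : IsOpen {z : ℝ × ℝ | z.2 ∈ (tsupport γ)ᶜ} :=
        (isClosed_tsupport γ).isOpen_compl.preimage continuous_snd
      have hzero : (fun z : ℝ × ℝ => γ z.2 * G z) =ᶠ[𝓝 z] fun _ => 0 := by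
        filter_upwards [hopen.mem_nhds hw] with y hy
        rw [image_eq_zero_of_notMem_tsupport hy, zero_mul]
      exact contDiffAt_const.congr_of_eventuallyEq hzero
  eq_zero z hz := by
    by_contra hne
    exact hz.not_ge (abs_le_of_tsupport_subset_Icc hsupp (left_ne_zero_of_mul hne))

lemma isLagrangianSymbol_mul_cutoff (hγ : ContDiff ℝ ∞ γ) (hsupp : tsupport γ ⊆ Icc (-η) η)
    {G : ℝ × ℝ → ℝ} (hG : ∀ z : ℝ × ℝ, z.1 ∈ Icc (-1) 1 → |z.2| ≤ η → ContDiffAt ℝ ∞ G z)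
    {q : ℝ → ℝ → ℝ}
    (hq : ∀ x ∈ Ioo (-1 : ℝ) 1, ∀ ξ, x + pprime ξ ≠ 0 → q x ξ = amplitudeSymbol m G x ξ)
    (hq_curve : ∀ x ξ, x + pprime ξ = 0 → q x ξ = 0) :
    IsLagrangianSymbol η m (fun x ξ => q x ξ * γ (lagrangianCoord x ξ)) := by
  refine ⟨_, isAmplitude_cutoff_mul hγ hsupp hG, fun x hx ξ => ?_⟩
  have hoff (hne : x + pprime ξ ≠ 0) : q x ξ * γ (lagrangianCoord x ξ) =
      amplitudeSymbol m (fun z => γ z.2 * G z) x ξ := by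
    rw [hq x hx ξ hne, amplitudeSymbol, amplitudeSymbol]
    ring
  refine ⟨hoff, ?_⟩
  by_cases hcurve : x + pprime ξ = 0
  · exact Or.inr (mul_eq_zero_of_left (hq_curve x ξ hcurve) _)
  · exact Or.inl (hoff hcurve)

lemma isLagrangianSymbol_etsym (hγ : ContDiff ℝ ∞ γ)
    (hsupp : tsupport γ ⊆ Icc (-(1 / 4)) (1 / 4)) :
    IsLagrangianSymbol (1 / 4) 3
      (fun x ξ => (ξ - dphi x) / (x + pprime ξ) * γ (lagrangianCoord x ξ)) := by
  refine isLagrangianSymbol_mul_cutoff hγ hsupp (G := quotientAmplitude)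
    (fun z => contDiffAt_quotientAmplitude) (fun x hx ξ hne => ?_) (fun x ξ h => by simp [h])
  rw [sub_dphi_eq_mul_quotientAmplitude hx, amplitudeSymbol, Real.rpow_ofNat, div_eq_iff hne]
  ring

lemma isLagrangianSymbol_esym (hγ : ContDiff ℝ ∞ γ)
    (hsupp : tsupport γ ⊆ Icc (-(1 / 4)) (1 / 4)) :
    IsLagrangianSymbol (1 / 4) (-3)
      (fun x ξ => (x + pprime ξ) / (ξ - dphi x) * γ (lagrangianCoord x ξ)) := by
  refine isLagrangianSymbol_mul_cutoff hγ hsupp (G := fun z => (quotientAmplitude z)⁻¹)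
    (fun z hp hw => (contDiffAt_quotientAmplitude hp hw).inv (quotientAmplitude_pos hp hw).ne')
    (fun x hx ξ hne => ?_) (fun x ξ h => by simp [h])
  rw [sub_dphi_eq_mul_quotientAmplitude hx, amplitudeSymbol, Real.rpow_neg (jap_pos ξ).le,
    Real.rpow_ofNat, mul_right_comm, ← mul_inv, div_mul_cancel_right₀ hne]

lemma etsym_eq_sign_mul {sg : ℝ} (hsg : sg = 1 ∨ sg = -1) (γ : ℝ → ℝ) :
    etsym γ sg = fun x ξ => sg *
      ((sg * ξ - dphi x) / (x + pprime (sg * ξ)) * γ (lagrangianCoord x (sg * ξ))) := by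
  funext x ξ
  simp only [etsym, lagrangianCoord, jap_sign_mul hsg]
  rcases hsg with rfl | rfl <;> ring

lemma esym_eq_sign_mul {sg : ℝ} (hsg : sg = 1 ∨ sg = -1) (γ : ℝ → ℝ) :
    esym γ sg = fun x ξ => sg *
      ((x + pprime (sg * ξ)) / (sg * ξ - dphi x) * γ (lagrangianCoord x (sg * ξ))) := by
  funext x ξ
  simp only [esym, lagrangianCoord, jap_sign_mul hsg]
  rcases hsg with rfl | rfl
  · simp only [one_mul]
  · rw [neg_one_mul ξ, neg_one_mul (_ * _), ← neg_mul, ← div_neg]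
    ring_nf

lemma exists_bound_iterate_esym_etsym (hγ : ContDiff ℝ ∞ γ)
    (hsupp : tsupport γ ⊆ Icc (-(1 / 4)) (1 / 4)) {sg : ℝ} (hsg : sg = 1 ∨ sg = -1) (α β : ℕ) :
    ∃ C : ℝ, 0 < C ∧ ∀ x ∈ Ioo (-1 : ℝ) 1, ∀ ξ : ℝ,
      |(pd1R^[α] (pd2R^[β] (esym γ sg))) x ξ| ≤ C * jap ξ ^ (-3 + 2 * (α : ℝ) - (β : ℝ)) ∧
      |(pd1R^[α] (pd2R^[β] (etsym γ sg))) x ξ| ≤ C * jap ξ ^ (3 + 2 * (α : ℝ) - (β : ℝ)) := by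
  rw [esym_eq_sign_mul hsg, etsym_eq_sign_mul hsg]
  obtain ⟨C₁, hC₁, h₁⟩ := (isLagrangianSymbol_esym hγ hsupp).exists_bound_iterate_sign hsg α β
  obtain ⟨C₂, -, h₂⟩ := (isLagrangianSymbol_etsym hγ hsupp).exists_bound_iterate_sign hsg α β
  refine ⟨max C₁ C₂, lt_max_of_lt_left hC₁, fun x hx ξ => ⟨?_, ?_⟩⟩
  · exact (h₁ x hx ξ).trans (mul_le_mul_of_nonneg_right (le_max_left _ _)
      (Real.rpow_nonneg (jap_pos ξ).le _))
  · exact (h₂ x hx ξ).trans (mul_le_mul_of_nonneg_right (le_max_right _ _)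
      (Real.rpow_nonneg (jap_pos ξ).le _))

end CutoffSymbols

section SizeOnSupport

open Set

variable {x ξ : ℝ}

lemma jap_dphi_equiv_jap (hx : x ∈ Ioo (-1 : ℝ) 1) (hw : |lagrangianCoord x ξ| ≤ 1 / 4) :
    1 / 2 * jap ξ ≤ jap (dphi x) ∧ jap (dphi x) ≤ (1 / 2)⁻¹ * jap ξ := by
  obtain ⟨hlower, hupper⟩ := sqrt_phiSqAmplitude_mem_Icc
    (z := (pprime ξ, lagrangianCoord x ξ)) (pprime_mem_Icc ξ) hw
  rw [sqrt_phiSqAmplitude] at hlower hupper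
  have hs : 0 < √(1 - x ^ 2) := Real.sqrt_pos.2 (one_sub_sq_pos_of_mem_Ioo hx)
  rw [jap_dphi hx, ← one_div (√(1 - x ^ 2)), le_div_iff₀ hs, div_le_iff₀ hs]
  constructor <;> linarith

lemma add_one_equiv_jap_rpow_neg_two (hξ : 0 ≤ ξ) (hw : |lagrangianCoord x ξ| ≤ 1 / 4) :
    4⁻¹ * jap ξ ^ (-(2 : ℝ)) ≤ x + 1 ∧ x + 1 ≤ 4 * jap ξ ^ (-(2 : ℝ)) := by
  have hx := eq_lagrangianCoord_mul_sub_pprime x ξ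
  have hp₀ : 0 ≤ pprime ξ := div_nonneg hξ (jap_pos ξ).le
  have hp₁ : pprime ξ ≤ 1 := (pprime_mem_Icc ξ).2
  have hq : 0 ≤ 1 - pprime ξ ^ 2 := by nlinarith
  obtain ⟨hw₁, hw₂⟩ := abs_le.1 hw
  rw [jap_rpow_neg_two]
  constructor <;> nlinarith

lemma sign_mul_add_one_equiv_jap_rpow_neg_two {sg : ℝ} (hsg : sg = 1 ∨ sg = -1)
    (hw : |lagrangianCoord x (sg * ξ)| ≤ 1 / 4) :
    (1 ≤ ξ → 4⁻¹ * jap ξ ^ (-(2 : ℝ)) ≤ sg * x + 1 ∧ sg * x + 1 ≤ 4 * jap ξ ^ (-(2 : ℝ))) ∧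
      (ξ ≤ -1 → 4⁻¹ * jap ξ ^ (-(2 : ℝ)) ≤ -(sg * x) + 1 ∧
        -(sg * x) + 1 ≤ 4 * jap ξ ^ (-(2 : ℝ))) := by
  have hright : |lagrangianCoord (sg * x) ξ| ≤ 1 / 4 := by
    rcases hsg with rfl | rfl
    · simpa only [one_mul] using hw
    · rw [← abs_lagrangianCoord_neg_neg]
      simpa only [neg_one_mul, neg_neg] using hw
  refine ⟨fun hξ => add_one_equiv_jap_rpow_neg_two (by linarith) hright, fun hξ => ?_⟩
  rw [← jap_neg ξ]
  exact add_one_equiv_jap_rpow_neg_two (by linarith)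
    ((abs_lagrangianCoord_neg_neg (sg * x) ξ).trans_le hright)

end SizeOnSupport

section DerivativesOfDphi

open Set Polynomial Topology

lemma iterate_deriv_dphi_eq_polynomial_mul_rpow (k : ℕ) : ∃ Q : ℝ[X], ∀ x ∈ Ioo (-1 : ℝ) 1,
    deriv^[k] dphi x = Q.eval x * (1 - x ^ 2) ^ (-(1 / 2 : ℝ) - k) := by
  induction k with
  | zero =>
    refine ⟨-X, fun x hx => ?_⟩
    rw [Nat.cast_zero, sub_zero, Real.rpow_neg (one_sub_sq_pos_of_mem_Ioo hx).le,
      ← Real.sqrt_eq_rpow, eval_neg, eval_X, ← div_eq_mul_inv]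
    rfl
  | succ k ih =>
    obtain ⟨Q, hQ⟩ := ih
    refine ⟨(1 - X ^ 2) * derivative Q + C (1 + 2 * (k : ℝ)) * X * Q, fun x hx => ?_⟩
    have hpos := one_sub_sq_pos_of_mem_Ioo hx
    have heq : deriv^[k] dphi =ᶠ[𝓝 x] fun x => Q.eval x * (1 - x ^ 2) ^ (-(1 / 2 : ℝ) - k) := by
      filter_upwards [isOpen_Ioo.mem_nhds hx] with y hy using hQ y hy
    have hbase : HasDerivAt (fun x : ℝ => 1 - x ^ 2) (-(2 * x)) x := by
      simpa using (hasDerivAt_pow 2 x).const_sub 1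
    have hderiv := (Q.hasDerivAt x).fun_mul
      (hbase.rpow_const (p := -(1 / 2 : ℝ) - k) (Or.inl hpos.ne'))
    have hpow : (1 - x ^ 2) ^ (-(1 / 2 : ℝ) - k) =
        (1 - x ^ 2) ^ (-(1 / 2 : ℝ) - k - 1) * (1 - x ^ 2) := by
      rw [← Real.rpow_add_one hpos.ne', sub_add_cancel]
    rw [Function.iterate_succ_apply', heq.deriv_eq, hderiv.deriv, Nat.cast_succ, ← sub_sub, hpow]
    simp only [eval_add, eval_mul, eval_sub, eval_one, eval_pow, eval_X, eval_C]
    ring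

lemma exists_bound_iterate_deriv_dphi (k : ℕ) : ∃ C : ℝ, 0 < C ∧ ∀ x ∈ Ioo (-1 : ℝ) 1,
    |deriv^[k] dphi x| ≤ C * jap (dphi x) ^ (1 + 2 * (k : ℝ)) := by
  obtain ⟨Q, hQ⟩ := iterate_deriv_dphi_eq_polynomial_mul_rpow k
  obtain ⟨C, hC⟩ := (isCompact_Icc (a := (-1 : ℝ)) (b := 1)).exists_bound_of_continuousOn
    Q.continuous.continuousOn
  refine ⟨max C 1, by positivity, fun x hx => ?_⟩
  have hpos := one_sub_sq_pos_of_mem_Ioo hx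
  have hjap : jap (dphi x) ^ (1 + 2 * (k : ℝ)) = (1 - x ^ 2) ^ (-(1 / 2 : ℝ) - k) := by
    rw [jap_dphi hx, Real.sqrt_eq_rpow, ← Real.rpow_neg hpos.le, ← Real.rpow_mul hpos.le]
    ring_nf
  have hrpow : 0 < (1 - x ^ 2) ^ (-(1 / 2 : ℝ) - k) := Real.rpow_pos_of_pos hpos _
  rw [hQ x hx, hjap, abs_mul, abs_of_pos hrpow]
  exact mul_le_mul_of_nonneg_right ((hC x (Ioo_subset_Icc_self hx)).trans (le_max_left _ _))
    hrpow.le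

end DerivativesOfDphi

/-- **Properties of the symbols `e_±`, `ẽ_±`** microlocalized near the Lagrangian
`Λ` (Delort, Lemma 1.2.6): derivative bounds, size of `⟨dφ⟩` and of `±x+1` on the
support of the cut-off, and growth of the derivatives of `dφ`. -/
theorem e_symbols_properties :
    ∃ η₀ : ℝ, 0 < η₀ ∧
      ∀ γ : ℝ → ℝ, ContDiff ℝ (⊤ : ℕ∞) γ → HasCompactSupport γ →
        tsupport γ ⊆ Set.Icc (-η₀) η₀ →
        ∀ sg : ℝ, sg = 1 ∨ sg = -1 →
          -- derivative bounds for e_± and ẽ_± :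
          (∀ α β : ℕ, ∃ C : ℝ, 0 < C ∧ ∀ x ∈ Set.Ioo (-1:ℝ) 1, ∀ ξ : ℝ,
            |(pd1R^[α] (pd2R^[β] (esym γ sg))) x ξ| ≤
              C * jap ξ ^ (-3 + 2*(α:ℝ) - (β:ℝ)) ∧
            |(pd1R^[α] (pd2R^[β] (etsym γ sg))) x ξ| ≤
              C * jap ξ ^ (3 + 2*(α:ℝ) - (β:ℝ))) ∧
          -- ⟨dφ(x)⟩ ~ ⟨ξ⟩ on the support of the cut-off:
          (∃ c : ℝ, 0 < c ∧ ∀ x ∈ Set.Ioo (-1:ℝ) 1, ∀ ξ : ℝ,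
            γ (jap ξ ^ 2 * (x + pprime (sg * ξ))) ≠ 0 →
              c * jap ξ ≤ jap (dphi x) ∧ jap (dphi x) ≤ c⁻¹ * jap ξ) ∧
          -- size of ±x+1 on the support of the cut-off:
          (∃ A : ℝ, 0 < A ∧ ∀ x ∈ Set.Ioo (-1:ℝ) 1, ∀ ξ : ℝ,
            γ (jap ξ ^ 2 * (x + pprime (sg * ξ))) ≠ 0 →
              (1 ≤ ξ → A⁻¹ * jap ξ ^ (-(2:ℝ)) ≤ sg * x + 1 ∧
                sg * x + 1 ≤ A * jap ξ ^ (-(2:ℝ))) ∧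
              (ξ ≤ -1 → A⁻¹ * jap ξ ^ (-(2:ℝ)) ≤ -(sg * x) + 1 ∧
                -(sg * x) + 1 ≤ A * jap ξ ^ (-(2:ℝ)))) ∧
          -- derivatives of dφ :
          (∀ k : ℕ, ∃ C : ℝ, 0 < C ∧ ∀ x ∈ Set.Ioo (-1:ℝ) 1,
            |deriv^[k] dphi x| ≤ C * jap (dphi x) ^ (1 + 2*(k:ℝ))) := by
  refine ⟨1 / 4, by norm_num, fun γ hγ _ hsupp sg hsg => ?_⟩
  have hw {x ξ : ℝ} (h : γ (jap ξ ^ 2 * (x + pprime (sg * ξ))) ≠ 0) :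
      |lagrangianCoord x (sg * ξ)| ≤ 1 / 4 := by
    rw [lagrangianCoord, jap_sign_mul hsg]
    exact abs_le_of_tsupport_subset_Icc hsupp h
  refine ⟨exists_bound_iterate_esym_etsym hγ hsupp hsg, ?_, ?_, exists_bound_iterate_deriv_dphi⟩
  · exact ⟨1 / 2, one_half_pos, fun x hx ξ h =>
      jap_sign_mul hsg ξ ▸ jap_dphi_equiv_jap hx (hw h)⟩
  · exact ⟨4, four_pos, fun x _ ξ h => sign_mul_add_one_equiv_jap_rpow_neg_two hsg (hw h)⟩

end
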